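/- For every α ∈ (0,1), every nonuniform time mesh, and all indices k ≥ 2 and 1 ≤ j ≤ k−1, the L2-1_σ coefficient a_j^k admits the representation a_j^k = −(t_k^* − t_{j−1})^{−α} − (α τ_j/(τ_j + τ_{j+1})) ∫_0^1 (τ_j + τ_{j+1} − s τ_j)(1 − s)(t_k^* − t_{j−1} − s τ_j)^{−α−1} ds. -/

import Mathlib

open MeasureTheory Real Finset

noncomputable section

/-- Time step `τ_j = t_j - t_{j-1}`. -/
def tau (t : ℕ → ℝ) (j : ℕ) : ℝ := t j - t (j - 1)

/-- Step ratio `ρ_j = τ_j / τ_{j-1}`. -/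
def rho (t : ℕ → ℝ) (j : ℕ) : ℝ := tau t j / tau t (j - 1)

/-- Offset node `t_k^* = t_{k-1} + σ τ_k` with `σ = 1 - α/2`. -/
def tstar (α : ℝ) (t : ℕ → ℝ) (k : ℕ) : ℝ := t (k - 1) + (1 - α / 2) * tau t k

/-- L2-1_σ coefficient `a_j^k`. -/
def acoef (α : ℝ) (t : ℕ → ℝ) (j k : ℕ) : ℝ :=
  ∫ θ in (0:ℝ)..1,
    (-2 * tau t j * (1 - θ) - tau t (j + 1)) /
      ((tau t j + tau t (j + 1)) * (tstar α t k - (t (j - 1) + θ * tau t j)) ^ α)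

/-- L2-1_σ coefficient `c_j^k`. -/
def ccoef (α : ℝ) (t : ℕ → ℝ) (j k : ℕ) : ℝ :=
  ∫ θ in (0:ℝ)..1,
    (tau t j ^ 2 * (2 * θ - 1)) /
      (tau t (j + 1) * (tau t j + tau t (j + 1)) *
        (tstar α t k - (t (j - 1) + θ * tau t j)) ^ α)

/-- `d_j^k = c_{j-1}^k - a_j^k`. -/
def dcoef (α : ℝ) (t : ℕ → ℝ) (j k : ℕ) : ℝ := ccoef α t (j - 1) k - acoef α t j k

/-- The lower-triangular L2-1_σ matrix `M` (entries vanish above the diagonal and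
for column index `0`). -/
def Mentry (α : ℝ) (t : ℕ → ℝ) (k j : ℕ) : ℝ :=
  if j = 0 ∨ k < j then 0
  else if j = k then ccoef α t (k - 1) k + (1 - α / 2) ^ (1 - α) / ((1 - α) * tau t k ^ α)
  else if j = 1 then -acoef α t 1 k
  else dcoef α t j k

end

/-!
On `[t_{j-1}, t_j]`, parametrised by `s ∈ [0, 1]`, the coefficient `a_j^k` is the integral of `L'(s)`
against the kernel `(t_k^* - t_{j-1} - s τ_j)^(-α)`, where `L` is the quadratic Lagrange basis
polynomial that is `1` at `t_{j-1}` and vanishes at `t_j` and `t_{j+1}`. Integrating by parts moves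
the derivative to the kernel; since `L 0 = 1` and `L 1 = 0`, only the boundary term at `t_{j-1}`
survives.
-/

theorem hasDerivAt_const_sub_mul_const (c m s : ℝ) :
    HasDerivAt (fun s : ℝ ↦ c - s * m) (-m) s :=
  (hasDerivAt_mul_const m).const_sub c

theorem integral_rpow_mul_deriv_eq {c m p a b : ℝ} {v v' : ℝ → ℝ}
    (hne : ∀ s ∈ Set.uIcc a b, c - s * m ≠ 0)
    (hv : ∀ s ∈ Set.uIcc a b, HasDerivAt v (v' s) s)
    (hv' : IntervalIntegrable v' volume a b) :
    ∫ s in a..b, (c - s * m) ^ p * v' s =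
      (c - b * m) ^ p * v b - (c - a * m) ^ p * v a
        + p * m * ∫ s in a..b, v s * (c - s * m) ^ (p - 1) := by
  have hkernel : ∀ s ∈ Set.uIcc a b,
      HasDerivAt (fun s ↦ (c - s * m) ^ p) (-m * p * (c - s * m) ^ (p - 1)) s := fun s hs ↦
    (hasDerivAt_const_sub_mul_const c m s).rpow_const (Or.inl (hne s hs))
  have hkernel_int :
      IntervalIntegrable (fun s ↦ -m * p * (c - s * m) ^ (p - 1)) volume a b := by
    refine ContinuousOn.intervalIntegrable (continuousOn_const.mul ?_)
    exact ContinuousOn.rpow_const (by fun_prop) fun s hs ↦ Or.inl (hne s hs)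
  rw [intervalIntegral.integral_mul_deriv_eq_deriv_mul hkernel hv hkernel_int hv',
    sub_eq_add_neg, ← intervalIntegral.integral_neg, ← intervalIntegral.integral_const_mul]
  congr 2 with s
  ring

theorem sub_mul_pos_of_mem_Icc {c m s : ℝ} (hc : 0 < c) (hmc : m < c) (hs : s ∈ Set.Icc 0 1) :
    0 < c - s * m := by
  rcases hs.2.eq_or_lt with rfl | hs1
  · linarith
  · calc 0 < (1 - s) * c + s * (c - m) :=
          add_pos_of_pos_of_nonneg (mul_pos (sub_pos.2 hs1) hc)
            (mul_nonneg hs.1 (sub_pos.2 hmc).le)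
      _ = c - s * m := by ring

/-- The quadratic Lagrange basis polynomial of the leftmost of three nodes `x`, `x + τ`,
`x + τ + τ'`, evaluated at `x + s * τ`. The common factor `τ` is cancelled, so that `τ = 0` is
allowed. -/
noncomputable def leftLagrange (τ τ' s : ℝ) : ℝ := (τ + τ' - s * τ) * (1 - s) / (τ + τ')

theorem leftLagrange_zero {τ τ' : ℝ} (h : τ + τ' ≠ 0) : leftLagrange τ τ' 0 = 1 := by
  simp [leftLagrange, h]

theorem leftLagrange_one (τ τ' : ℝ) : leftLagrange τ τ' 1 = 0 := by
  simp [leftLagrange]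

theorem hasDerivAt_leftLagrange (τ τ' s : ℝ) :
    HasDerivAt (leftLagrange τ τ') ((-2 * τ * (1 - s) - τ') / (τ + τ')) s := by
  have hfactor : HasDerivAt (fun s : ℝ ↦ 1 - s) (-1) s := (hasDerivAt_id s).const_sub 1
  refine (((hasDerivAt_const_sub_mul_const (τ + τ') τ s).mul hfactor).div_const
    (τ + τ')).congr_deriv ?_
  ring

theorem integral_rpow_mul_deriv_leftLagrange {τ τ' c : ℝ} (p : ℝ) (hτ : τ + τ' ≠ 0)
    (hc : 0 < c) (hτc : τ < c) :
    ∫ s in (0:ℝ)..1, (c - s * τ) ^ p * ((-2 * τ * (1 - s) - τ') / (τ + τ')) =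
      -c ^ p + p * τ * ∫ s in (0:ℝ)..1, leftLagrange τ τ' s * (c - s * τ) ^ (p - 1) := by
  have hne : ∀ s ∈ Set.uIcc (0:ℝ) 1, c - s * τ ≠ 0 := fun s hs ↦
    (sub_mul_pos_of_mem_Icc hc hτc (Set.uIcc_of_le (zero_le_one' ℝ) ▸ hs)).ne'
  have hderiv_int :
      IntervalIntegrable (fun s ↦ (-2 * τ * (1 - s) - τ') / (τ + τ')) volume 0 1 :=
    Continuous.intervalIntegrable (by fun_prop) 0 1
  rw [integral_rpow_mul_deriv_eq hne (fun s _ ↦ hasDerivAt_leftLagrange τ τ' s) hderiv_int,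
    leftLagrange_zero hτ, leftLagrange_one]
  simp only [mul_zero, zero_mul, sub_zero, mul_one, zero_sub]

section Mesh

variable {t : ℕ → ℝ}

theorem tau_pos (hmono : StrictMono t) {j : ℕ} (hj : 1 ≤ j) : 0 < tau t j :=
  sub_pos.2 (hmono (Nat.sub_one_lt_of_le hj le_rfl))

theorem lt_tstar {α : ℝ} (hα : α < 2) (hmono : StrictMono t) {j k : ℕ} (hjk : j < k) :
    t j < tstar α t k :=
  calc t j ≤ t (k - 1) := hmono.monotone (Nat.le_sub_one_of_lt hjk)
    _ < tstar α t k :=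
      lt_add_of_pos_right _ (mul_pos (by linarith) (tau_pos hmono (Nat.one_le_of_lt hjk)))

theorem acoef_eq_integral_rpow_mul_deriv_leftLagrange {α : ℝ} {j k : ℕ}
    (hleft : t (j - 1) < tstar α t k) (hright : t j < tstar α t k) :
    acoef α t j k = ∫ s in (0:ℝ)..1, (tstar α t k - t (j - 1) - s * tau t j) ^ (-α) *
      ((-2 * tau t j * (1 - s) - tau t (j + 1)) / (tau t j + tau t (j + 1))) := by
  refine intervalIntegral.integral_congr fun s hs ↦ ?_
  have hpos : 0 < tstar α t k - t (j - 1) - s * tau t j :=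
    sub_mul_pos_of_mem_Icc (sub_pos.2 hleft) (sub_lt_sub_right hright _)
      (Set.uIcc_of_le (zero_le_one' ℝ) ▸ hs)
  simp only [← sub_sub (tstar α t k), rpow_neg hpos.le, ← div_div]
  rw [div_eq_inv_mul _ (_ ^ α)]

end Mesh

theorem acoef_repr_left_general (α : ℝ) (t : ℕ → ℝ) (k j : ℕ)
    (hτ : tau t j + tau t (j + 1) ≠ 0)
    (hleft : t (j - 1) < tstar α t k) (hright : t j < tstar α t k) :
    acoef α t j k
      = -(tstar α t k - t (j - 1)) ^ (-α)
        - α * tau t j / (tau t j + tau t (j + 1)) *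
          ∫ s in (0:ℝ)..1,
            (tau t j + tau t (j + 1) - s * tau t j) * (1 - s) *
              (tstar α t k - t (j - 1) - s * tau t j) ^ (-α - 1) := by
  rw [acoef_eq_integral_rpow_mul_deriv_leftLagrange hleft hright,
    integral_rpow_mul_deriv_leftLagrange (-α) hτ (sub_pos.2 hleft) (sub_lt_sub_right hright _)]
  simp only [leftLagrange, div_mul_eq_mul_div _ (tau t j + tau t (j + 1)),
    intervalIntegral.integral_div]
  ring

/-- Reformulation of `a_j^k` around `t_{j-1}` for `k ≥ 2`, `1 ≤ j ≤ k-1`. -/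
theorem acoef_repr_left (α : ℝ) (hα : α ∈ Set.Ioo (0:ℝ) 1)
    (t : ℕ → ℝ) (ht0 : t 0 = 0) (hmono : StrictMono t)
    (k j : ℕ) (hk : 2 ≤ k) (hj1 : 1 ≤ j) (hj2 : j ≤ k - 1) :
    acoef α t j k
      = -(tstar α t k - t (j - 1)) ^ (-α)
        - α * tau t j / (tau t j + tau t (j + 1)) *
          ∫ s in (0:ℝ)..1,
            (tau t j + tau t (j + 1) - s * tau t j) * (1 - s) *
              (tstar α t k - t (j - 1) - s * tau t j) ^ (-α - 1) := by
  have hα2 : α < 2 := by linarith [hα.2]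
  exact acoef_repr_left_general α t k j
    (add_pos (tau_pos hmono hj1) (tau_pos hmono j.succ_pos)).ne'
    (lt_tstar hα2 hmono (by omega)) (lt_tstar hα2 hmono (by omega))
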